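/- The abelianizing filtration of A(1) is multiplicative: with F⁰ = A(1), F¹ = (Sq1, Sq2), F² = (Sq2), F³ = (Sq1·Sq2, Sq2·Sq1), F⁴ = (Q₀), F⁵ = (Sq1·Q₀, Sq2·Q₀), F⁶ = (Sq2·Q₀), F⁷ = (Sq1·Sq2·Q₀), and Fⁿ = 0 for n ≥ 8, where each (x, ...) denotes the two-sided ideal generated by the listed elements and Q₀ = Sq1·Sq2 + Sq2·Sq1, we have Fᵐ · Fⁿ ⊆ F^{m+n} for all natural numbers m and n. -/

import Mathlib

/-- The relations defining `A(1)`: `Sq¹·Sq¹ = 0` and `Sq²·Sq² + Sq¹·Sq²·Sq¹ = 0`. -/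
inductive A1Rel : FreeAlgebra (ZMod 2) (Fin 2) → FreeAlgebra (ZMod 2) (Fin 2) → Prop
  | sq1 : A1Rel (FreeAlgebra.ι (ZMod 2) 0 * FreeAlgebra.ι (ZMod 2) 0) 0
  | sq2 : A1Rel (FreeAlgebra.ι (ZMod 2) 1 * FreeAlgebra.ι (ZMod 2) 1 +
      FreeAlgebra.ι (ZMod 2) 0 * FreeAlgebra.ι (ZMod 2) 1 * FreeAlgebra.ι (ZMod 2) 0) 0

/-- `A(1)`, the subalgebra of the mod 2 Steenrod algebra generated by `Sq¹` and `Sq²`, presented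
as the quotient of the free `F₂`-algebra on two generators `Sq1, Sq2` by the two-sided ideal
generated by `Sq1·Sq1` and `Sq2·Sq2 + Sq1·Sq2·Sq1`. -/
abbrev A1 : Type := RingQuot A1Rel

/-- The image of `Sq¹` in `A(1)`. -/
noncomputable def Sq1 : A1 := RingQuot.mkAlgHom (ZMod 2) A1Rel (FreeAlgebra.ι (ZMod 2) 0)

/-- The image of `Sq²` in `A(1)`. -/
noncomputable def Sq2 : A1 := RingQuot.mkAlgHom (ZMod 2) A1Rel (FreeAlgebra.ι (ZMod 2) 1)

/-- Milnor's element `Q₀ = Sq¹·Sq² + Sq²·Sq¹` in `A(1)`. -/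
noncomputable def Q0 : A1 := Sq1 * Sq2 + Sq2 * Sq1

/-- The abelianizing filtration of `A(1)`, a decreasing filtration by two-sided ideals. -/
noncomputable def abFilt : ℕ → TwoSidedIdeal A1
  | 0 => ⊤
  | 1 => TwoSidedIdeal.span {Sq1, Sq2}
  | 2 => TwoSidedIdeal.span {Sq2}
  | 3 => TwoSidedIdeal.span {Sq1 * Sq2, Sq2 * Sq1}
  | 4 => TwoSidedIdeal.span {Q0}
  | 5 => TwoSidedIdeal.span {Sq1 * Q0, Sq2 * Q0}
  | 6 => TwoSidedIdeal.span {Sq2 * Q0}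
  | 7 => TwoSidedIdeal.span {Sq1 * Sq2 * Q0}
  | _ + 8 => ⊥

/-!
Put `a = Sq1`, `b = Sq2`, `q = Q0`. In `A(1)` the element `q` is central with `q² = 0`, and
`a² = 0`, `b² = a q`, `b a = a b + q`. Give `a`, `b`, `q` the weights `1`, `2`, `4`. Rewriting
`b a`, of weight `3`, produces terms of weights `3` and `4`, so it never lowers weights, and hence
the spans of the ordered monomials `aⁱ bʲ qᵏ` of weight at least `n` form a multiplicative
filtration. That filtration is `Fⁿ`: since `b² = a q` raises the weight by one, only the exponents
`0` and `1` matter, and the eight remaining monomials have the weights `0, …, 7` and lie in the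
corresponding `Fⁿ`.
-/

theorem pow_mul_mem_of_mul_mem {M S : Type*} [Monoid M] [SetLike S M] {F : ℕ → S} {c x : M}
    {d n : ℕ} (hc : ∀ {n x}, x ∈ F n → c * x ∈ F (d + n)) (i : ℕ) (hx : x ∈ F n) :
    c ^ i * x ∈ F (d * i + n) := by
  induction i with
  | zero => simpa using hx
  | succ i ih =>
    rw [pow_succ', mul_assoc, show d * (i + 1) + n = d + (d * i + n) by ring]
    exact hc ih

/-- Elements `a`, `b`, `q` satisfying the relations of the Heisenberg Lie algebra, `q` being the
central commutator. The commutator relation is written without subtraction. -/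
structure IsHeisenbergTriple {A : Type*} [Semiring A] (a b q : A) : Prop where
  commute_left : Commute a q
  commute_right : Commute b q
  mul_swap : b * a = a * b + q

/-- The weight filtration: the span of the ordered monomials `aⁱ bʲ qᵏ` of weight at least `n`,
where `a`, `b`, `q` have the weights `u`, `v`, `w`. Exponents are not bounded, so a monomial may
well vanish or coincide with one of a different weight. -/
def weightFilt (R : Type*) {A : Type*} [CommSemiring R] [Semiring A] [Algebra R A]
    (a b q : A) (u v w n : ℕ) : Submodule R A :=
  Submodule.span R {x | ∃ i j k, n ≤ u * i + v * j + w * k ∧ a ^ i * b ^ j * q ^ k = x}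

section WeightFilt

variable {R A : Type*} [CommSemiring R] [Semiring A] [Algebra R A] {a b q c x y : A}
  {u v w d m n : ℕ}

theorem monomial_mem_weightFilt (i j k : ℕ) (h : n ≤ u * i + v * j + w * k) :
    a ^ i * b ^ j * q ^ k ∈ weightFilt R a b q u v w n :=
  Submodule.subset_span ⟨i, j, k, h, rfl⟩

theorem weightFilt_le_iff {N : Submodule R A} :
    weightFilt R a b q u v w n ≤ N ↔
      ∀ i j k, n ≤ u * i + v * j + w * k → a ^ i * b ^ j * q ^ k ∈ N := by
  refine Submodule.span_le.trans ⟨fun h i j k hn ↦ h ⟨i, j, k, hn, rfl⟩, ?_⟩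
  rintro h _ ⟨i, j, k, hn, rfl⟩
  exact h i j k hn

theorem one_mem_weightFilt_zero : (1 : A) ∈ weightFilt R a b q u v w 0 := by
  simpa using monomial_mem_weightFilt (a := a) (b := b) (q := q) 0 0 0 (Nat.zero_le _)

theorem left_mem_weightFilt : a ∈ weightFilt R a b q u v w u := by
  simpa using monomial_mem_weightFilt (a := a) (b := b) (q := q) 1 0 0 (by simp)

theorem right_mem_weightFilt : b ∈ weightFilt R a b q u v w v := by
  simpa using monomial_mem_weightFilt (a := a) (b := b) (q := q) 0 1 0 (by simp)

theorem weightFilt_antitone : Antitone (weightFilt R a b q u v w) := fun _ _ hmn ↦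
  weightFilt_le_iff.2 fun i j k h ↦ monomial_mem_weightFilt i j k (hmn.trans h)

theorem mul_mem_weightFilt_of_monomial
    (hc : ∀ i j k, c * (a ^ i * b ^ j * q ^ k) ∈
      weightFilt R a b q u v w (d + (u * i + v * j + w * k)))
    (hx : x ∈ weightFilt R a b q u v w n) : c * x ∈ weightFilt R a b q u v w (d + n) := by
  suffices h : weightFilt R a b q u v w n ≤
      (weightFilt R a b q u v w (d + n)).comap (LinearMap.mulLeft R c) from h hx
  exact weightFilt_le_iff.2 fun i j k hn ↦
    weightFilt_antitone (Nat.add_le_add_left hn d) (hc i j k)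

theorem left_mul_mem_weightFilt (hx : x ∈ weightFilt R a b q u v w n) :
    a * x ∈ weightFilt R a b q u v w (u + n) := by
  refine mul_mem_weightFilt_of_monomial (fun i j k ↦ ?_) hx
  rw [← mul_assoc, ← mul_assoc, ← pow_succ']
  exact monomial_mem_weightFilt (i + 1) j k (by linarith)

namespace IsHeisenbergTriple

variable (h : IsHeisenbergTriple a b q)

include h

theorem right_mul_left_pow_succ (i : ℕ) :
    b * a ^ (i + 1) = a ^ (i + 1) * b + (i + 1) • (a ^ i * q) := by
  induction i with
  | zero => simpa using h.mul_swap
  | succ i ih =>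
    calc b * a ^ (i + 1 + 1)
        = a ^ (i + 1) * (b * a) + (i + 1) • (a ^ i * (q * a)) := by
          rw [pow_succ, ← mul_assoc, ih, add_mul, smul_mul_assoc, mul_assoc, mul_assoc]
      _ = a ^ (i + 1) * (a * b + q) + (i + 1) • (a ^ i * (a * q)) := by
          rw [h.mul_swap, h.commute_left.eq]
      _ = a ^ (i + 1 + 1) * b + (i + 1 + 1) • (a ^ (i + 1) * q) := by
          rw [mul_add, ← mul_assoc, ← mul_assoc, ← pow_succ, ← pow_succ, add_assoc,
            succ_nsmul' _ (i + 1)]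

theorem central_mul_monomial (i j k : ℕ) :
    q * (a ^ i * b ^ j * q ^ k) = a ^ i * b ^ j * q ^ (k + 1) := by
  have hq : Commute (a ^ i * b ^ j) q :=
    (h.commute_left.pow_left i).mul_left (h.commute_right.pow_left j)
  rw [← mul_assoc, ← hq.eq, mul_assoc, ← pow_succ']

theorem central_mul_mem_weightFilt (hx : x ∈ weightFilt R a b q u v w n) :
    q * x ∈ weightFilt R a b q u v w (w + n) := by
  refine mul_mem_weightFilt_of_monomial (fun i j k ↦ ?_) hx
  rw [h.central_mul_monomial]
  exact monomial_mem_weightFilt i j (k + 1) (by linarith)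

theorem right_mul_mem_weightFilt (huvw : u + v ≤ w) (hx : x ∈ weightFilt R a b q u v w n) :
    b * x ∈ weightFilt R a b q u v w (v + n) := by
  refine mul_mem_weightFilt_of_monomial (fun i j k ↦ ?_) hx
  cases i with
  | zero =>
    have hb : b * (a ^ 0 * b ^ j * q ^ k) = a ^ 0 * b ^ (j + 1) * q ^ k := by
      simp only [pow_zero, one_mul, pow_succ', mul_assoc]
    rw [hb]
    exact monomial_mem_weightFilt 0 (j + 1) k (by linarith)
  | succ i =>
    have hb : b * (a ^ (i + 1) * b ^ j * q ^ k) =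
        a ^ (i + 1) * b ^ (j + 1) * q ^ k + (i + 1) • (a ^ i * b ^ j * q ^ (k + 1)) := by
      rw [← mul_assoc, ← mul_assoc, h.right_mul_left_pow_succ, add_mul, add_mul, mul_assoc _ b,
        ← pow_succ', smul_mul_assoc, smul_mul_assoc, mul_assoc _ q,
        ← (h.commute_right.pow_left j).eq, ← mul_assoc, mul_assoc _ q, ← pow_succ']
    rw [hb]
    exact add_mem (monomial_mem_weightFilt (i + 1) (j + 1) k (by linarith))
      (nsmul_mem (monomial_mem_weightFilt i j (k + 1) (by linarith)) _)

theorem mul_mem_weightFilt (huvw : u + v ≤ w) (hx : x ∈ weightFilt R a b q u v w m)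
    (hy : y ∈ weightFilt R a b q u v w n) : x * y ∈ weightFilt R a b q u v w (m + n) := by
  suffices hm : weightFilt R a b q u v w m ≤
      (weightFilt R a b q u v w (m + n)).comap (LinearMap.mulRight R y) from hm hx
  refine weightFilt_le_iff.2 fun i j k hijk ↦ ?_
  have hq : q ^ k * y ∈ weightFilt R a b q u v w (w * k + n) :=
    pow_mul_mem_of_mul_mem (fun hx ↦ h.central_mul_mem_weightFilt hx) k hy
  have hb : b ^ j * (q ^ k * y) ∈ weightFilt R a b q u v w (v * j + (w * k + n)) :=
    pow_mul_mem_of_mul_mem (fun hx ↦ h.right_mul_mem_weightFilt huvw hx) j hq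
  have ha : a ^ i * (b ^ j * (q ^ k * y)) ∈
      weightFilt R a b q u v w (u * i + (v * j + (w * k + n))) :=
    pow_mul_mem_of_mul_mem (fun hx ↦ left_mul_mem_weightFilt hx) i hb
  rw [Submodule.mem_comap, LinearMap.mulRight_apply, mul_assoc, mul_assoc]
  exact weightFilt_antitone (by linarith) ha

theorem adjoin_le_weightFilt_zero (huvw : u + v ≤ w) :
    Subalgebra.toSubmodule (Algebra.adjoin R {a, b}) ≤ weightFilt R a b q u v w 0 := by
  intro x hx
  induction hx using Algebra.adjoin_induction with
  | mem x hx =>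
    rcases hx with rfl | rfl
    · exact weightFilt_antitone (Nat.zero_le u) left_mem_weightFilt
    · exact weightFilt_antitone (Nat.zero_le v) right_mem_weightFilt
  | algebraMap r =>
    rw [Algebra.algebraMap_eq_smul_one]
    exact Submodule.smul_mem _ r one_mem_weightFilt_zero
  | add x y _ _ hx hy => exact add_mem hx hy
  | mul x y _ _ hx hy => exact h.mul_mem_weightFilt (m := 0) (n := 0) huvw hx hy

end IsHeisenbergTriple

end WeightFilt

namespace A1

theorem Sq1_mul_Sq1 : Sq1 * Sq1 = 0 := by
  simpa only [Sq1, map_mul, map_zero] using RingQuot.mkAlgHom_rel (ZMod 2) A1Rel.sq1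

theorem Sq2_mul_Sq2 : Sq2 * Sq2 = Sq1 * Sq2 * Sq1 := by
  have h : Sq2 * Sq2 + Sq1 * Sq2 * Sq1 = 0 := by
    simpa only [Sq1, Sq2, map_add, map_mul, map_zero] using RingQuot.mkAlgHom_rel (ZMod 2) A1Rel.sq2
  rwa [← ZModModule.sub_eq_add, sub_eq_zero] at h

theorem Sq1_mul_Q0 : Sq1 * Q0 = Sq1 * Sq2 * Sq1 := by
  rw [Q0, mul_add, ← mul_assoc, ← mul_assoc, Sq1_mul_Sq1, zero_mul, zero_add]

theorem Q0_mul_Sq1 : Q0 * Sq1 = Sq1 * Sq2 * Sq1 := by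
  rw [Q0, add_mul, mul_assoc Sq2, Sq1_mul_Sq1, mul_zero, add_zero]

theorem Sq2_mul_Q0 : Sq2 * Q0 = Sq2 * Sq1 * Sq2 := by
  rw [Q0, mul_add, ← mul_assoc, ← mul_assoc, Sq2_mul_Sq2, mul_assoc (Sq1 * Sq2),
    Sq1_mul_Sq1, mul_zero, add_zero]

theorem Q0_mul_Sq2 : Q0 * Sq2 = Sq2 * Sq1 * Sq2 := by
  rw [Q0, add_mul, mul_assoc Sq1, Sq2_mul_Sq2, ← mul_assoc, ← mul_assoc, Sq1_mul_Sq1, zero_mul,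
    zero_mul, zero_add]

theorem isHeisenbergTriple : IsHeisenbergTriple Sq1 Sq2 Q0 where
  commute_left := Sq1_mul_Q0.trans Q0_mul_Sq1.symm
  commute_right := Sq2_mul_Q0.trans Q0_mul_Sq2.symm
  mul_swap := by rw [Q0, ← add_assoc, ZModModule.add_self, zero_add]

theorem Q0_mul_Q0 : Q0 * Q0 = 0 := by
  have h₁ : Sq1 * Sq2 * Q0 = Sq2 * Sq2 * Sq2 := by
    rw [mul_assoc, isHeisenbergTriple.commute_right.eq, ← mul_assoc, Sq1_mul_Q0, Sq2_mul_Sq2]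
  have h₂ : Sq2 * Sq1 * Q0 = Sq2 * Sq2 * Sq2 := by
    rw [mul_assoc, Sq1_mul_Q0, ← Sq2_mul_Sq2, mul_assoc]
  nth_rw 1 [Q0]
  rw [add_mul, h₁, h₂, ZModModule.add_self]

theorem adjoin_Sq1_Sq2 : Algebra.adjoin (ZMod 2) {Sq1, Sq2} = ⊤ := by
  have hgen : {Sq1, Sq2} =
      RingQuot.mkAlgHom (ZMod 2) A1Rel '' Set.range (FreeAlgebra.ι (ZMod 2)) := by
    ext x
    simp [Sq1, Sq2, eq_comm]
  rw [hgen, ← AlgHom.map_adjoin, FreeAlgebra.adjoin_range_ι, Algebra.map_top, AlgHom.range_eq_top]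
  exact RingQuot.mkAlgHom_surjective (ZMod 2) A1Rel

theorem weightFilt_zero_eq_top : weightFilt (ZMod 2) Sq1 Sq2 Q0 1 2 4 0 = ⊤ := by
  rw [eq_top_iff, ← Algebra.top_toSubmodule, ← adjoin_Sq1_Sq2]
  exact isHeisenbergTriple.adjoin_le_weightFilt_zero (by norm_num)

/-- The weight filtration of `A(1)` for the weights `1`, `2`, `4` of `Sq1`, `Sq2`, `Q0`, as a
filtration by two-sided ideals. -/
noncomputable def pbwIdeal (n : ℕ) : TwoSidedIdeal A1 :=
  TwoSidedIdeal.mk' (weightFilt (ZMod 2) Sq1 Sq2 Q0 1 2 4 n) (zero_mem _) add_mem neg_mem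
    (fun {x y} hy ↦ by
      have hx : x ∈ weightFilt (ZMod 2) Sq1 Sq2 Q0 1 2 4 0 := by simp [weightFilt_zero_eq_top]
      simpa using isHeisenbergTriple.mul_mem_weightFilt (by norm_num) hx hy)
    (fun {x y} hx ↦ by
      have hy : y ∈ weightFilt (ZMod 2) Sq1 Sq2 Q0 1 2 4 0 := by simp [weightFilt_zero_eq_top]
      simpa using isHeisenbergTriple.mul_mem_weightFilt (by norm_num) hx hy)

theorem mem_pbwIdeal {n : ℕ} {x : A1} :
    x ∈ pbwIdeal n ↔ x ∈ weightFilt (ZMod 2) Sq1 Sq2 Q0 1 2 4 n :=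
  TwoSidedIdeal.mem_mk' ..

theorem monomial_mem_pbwIdeal {n : ℕ} (i j k : ℕ) (h : n ≤ i + 2 * j + 4 * k) :
    Sq1 ^ i * Sq2 ^ j * Q0 ^ k ∈ pbwIdeal n :=
  mem_pbwIdeal.2 (monomial_mem_weightFilt i j k (by rwa [one_mul]))

theorem abFilt_le_pbwIdeal : ∀ n, abFilt n ≤ pbwIdeal n
  | 0 => fun x _ ↦ mem_pbwIdeal.2 (by simp [weightFilt_zero_eq_top])
  | 1 => by
    refine TwoSidedIdeal.span_le.2 ?_
    rintro _ (rfl | rfl)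
    · simpa using monomial_mem_pbwIdeal (n := 1) 1 0 0 (by norm_num)
    · simpa using monomial_mem_pbwIdeal (n := 1) 0 1 0 (by norm_num)
  | 2 => by
    refine TwoSidedIdeal.span_le.2 (Set.singleton_subset_iff.2 ?_)
    simpa using monomial_mem_pbwIdeal (n := 2) 0 1 0 (by norm_num)
  | 3 => by
    refine TwoSidedIdeal.span_le.2 ?_
    rintro _ (rfl | rfl)
    · simpa using monomial_mem_pbwIdeal (n := 3) 1 1 0 (by norm_num)
    · have h : Sq2 * Sq1 ∈ weightFilt (ZMod 2) Sq1 Sq2 Q0 1 2 4 (2 + 1) :=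
        isHeisenbergTriple.right_mul_mem_weightFilt (by norm_num) left_mem_weightFilt
      exact mem_pbwIdeal.2 h
  | 4 => by
    refine TwoSidedIdeal.span_le.2 (Set.singleton_subset_iff.2 ?_)
    simpa using monomial_mem_pbwIdeal (n := 4) 0 0 1 (by norm_num)
  | 5 => by
    refine TwoSidedIdeal.span_le.2 ?_
    rintro _ (rfl | rfl)
    · simpa using monomial_mem_pbwIdeal (n := 5) 1 0 1 (by norm_num)
    · simpa using monomial_mem_pbwIdeal (n := 5) 0 1 1 (by norm_num)
  | 6 => by
    refine TwoSidedIdeal.span_le.2 (Set.singleton_subset_iff.2 ?_)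
    simpa using monomial_mem_pbwIdeal (n := 6) 0 1 1 (by norm_num)
  | 7 => by
    refine TwoSidedIdeal.span_le.2 (Set.singleton_subset_iff.2 ?_)
    simpa using monomial_mem_pbwIdeal (n := 7) 1 1 1 (by norm_num)
  | _ + 8 => bot_le

theorem abFilt_succ_le : ∀ n, abFilt (n + 1) ≤ abFilt n
  | 0 => le_top
  | 1 => TwoSidedIdeal.span_mono (by simp)
  | 2 => by
    have h : Sq2 ∈ abFilt 2 := TwoSidedIdeal.subset_span rfl
    refine TwoSidedIdeal.span_le.2 ?_
    rintro _ (rfl | rfl)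
    · exact TwoSidedIdeal.mul_mem_left _ _ _ h
    · exact TwoSidedIdeal.mul_mem_right _ _ _ h
  | 3 => TwoSidedIdeal.span_le.2 <| Set.singleton_subset_iff.2 <|
      add_mem (TwoSidedIdeal.subset_span (Or.inl rfl)) (TwoSidedIdeal.subset_span (Or.inr rfl))
  | 4 => by
    have h : Q0 ∈ abFilt 4 := TwoSidedIdeal.subset_span rfl
    refine TwoSidedIdeal.span_le.2 ?_
    rintro _ (rfl | rfl) <;> exact TwoSidedIdeal.mul_mem_left _ _ _ h
  | 5 => TwoSidedIdeal.span_mono (by simp)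
  | 6 => by
    have h : Sq2 * Q0 ∈ abFilt 6 := TwoSidedIdeal.subset_span rfl
    refine TwoSidedIdeal.span_le.2 (Set.singleton_subset_iff.2 ?_)
    rw [mul_assoc]
    exact TwoSidedIdeal.mul_mem_left _ _ _ h
  | _ + 7 => bot_le

theorem abFilt_antitone : Antitone abFilt :=
  antitone_nat_of_succ_le abFilt_succ_le

theorem monomial_mem_abFilt (i j k : ℕ) :
    Sq1 ^ i * Sq2 ^ j * Q0 ^ k ∈ abFilt (i + 2 * j + 4 * k) := by
  match i, j, k with
  | i + 2, _, _ =>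
    rw [pow_add, sq, Sq1_mul_Sq1, mul_zero, zero_mul, zero_mul]
    exact zero_mem _
  | _, _, k + 2 =>
    rw [pow_add, sq Q0, Q0_mul_Q0, mul_zero, mul_zero]
    exact zero_mem _
  | i, j + 2, k =>
    have h : Sq1 ^ i * Sq2 ^ (j + 2) * Q0 ^ k = Sq1 ^ (i + 1) * Sq2 ^ j * Q0 ^ (k + 1) := by
      rw [add_comm j, pow_add, sq, Sq2_mul_Sq2, ← Sq1_mul_Q0, mul_assoc Sq1,
        (isHeisenbergTriple.commute_right.symm.pow_right j).eq, ← mul_assoc, ← mul_assoc,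
        ← pow_succ, mul_assoc _ Q0, ← pow_succ']
    rw [h]
    exact abFilt_antitone (by omega) (monomial_mem_abFilt (i + 1) j (k + 1))
  | 0, 0, 0 => exact trivial
  | 1, 0, 0 => exact TwoSidedIdeal.subset_span (by simp)
  | 0, 1, 0 => exact TwoSidedIdeal.subset_span (by simp)
  | 1, 1, 0 => exact TwoSidedIdeal.subset_span (by simp)
  | 0, 0, 1 => exact TwoSidedIdeal.subset_span (by simp)
  | 1, 0, 1 => exact TwoSidedIdeal.subset_span (by simp)
  | 0, 1, 1 => exact TwoSidedIdeal.subset_span (by simp)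
  | 1, 1, 1 => exact TwoSidedIdeal.subset_span (by simp)

theorem abFilt_eq_pbwIdeal (n : ℕ) : abFilt n = pbwIdeal n := by
  refine (abFilt_le_pbwIdeal n).antisymm fun x hx ↦ ?_
  suffices h : weightFilt (ZMod 2) Sq1 Sq2 Q0 1 2 4 n ≤
      (abFilt n).asIdeal.restrictScalars (ZMod 2) from
    TwoSidedIdeal.mem_asIdeal.1 (h (mem_pbwIdeal.1 hx))
  refine weightFilt_le_iff.2 fun i j k hijk ↦ TwoSidedIdeal.mem_asIdeal.2 ?_
  exact abFilt_antitone (by rwa [one_mul] at hijk) (monomial_mem_abFilt i j k)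

end A1

/-- The abelianizing filtration of `A(1)` is multiplicative: `Fᵐ · Fⁿ ⊆ F^(m+n)`. -/
theorem abFilt_multiplicative (m n : ℕ) :
    (abFilt m).asIdeal * (abFilt n).asIdeal ≤ (abFilt (m + n)).asIdeal := by
  simp only [A1.abFilt_eq_pbwIdeal, Ideal.mul_le, TwoSidedIdeal.mem_asIdeal, A1.mem_pbwIdeal]
  intro x hx y hy
  exact A1.isHeisenbergTriple.mul_mem_weightFilt (by norm_num) hx hy
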